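/- arXiv:2412.03800 — 2 statements merged into one kernel-verified Lean document; each statement's English description precedes it below -/
import Mathlib

section
/- Let T ≥ 1 be a natural number, let S be a type, let J be a nonempty finite index set, and for each j ∈ J let τ_j : Fin T → S be an injective function (an episode of length T with pairwise distinct states) and H_j ∈ ℝ its episodic entropy value. Define the loss L̃(r) = Σ_{j∈J} Σ_{t<T} (H_j − T·r(τ_j(t)))² for r : S → ℝ. Define r* : S → ℝ by r*(s) = (Σ_{j : s ∈ range τ_j} H_j) / (T · |{j ∈ J : s ∈ range τ_j}|) whenever the set {j ∈ J : s ∈ range τ_j} is nonempty, and r*(s) = 0 otherwise. Then for every r : S → ℝ, L̃(r*) ≤ L̃(r); moreover any r with L̃(r) = L̃(r*) agrees with r* at every state s that lies in the range of some τ_j. -/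
/-!
A reward enters the loss only through its values at visited states, so minimizing it is a
least-squares problem over functions of the state. For the average reward `r*` the residuals
`h - c * r*` sum to zero over the visits of each state, hence are orthogonal to every function of
the state. By Pythagoras the loss of `r` exceeds that of `r*` by the sum over all visits of
`(c * r* - c * r) ^ 2`.
-/

section VisitLoss

variable {I S K : Type*} [Fintype I]

open Classical in
theorem sum_mul_comp_eq_zero_of_sum_fiber_eq_zero [NonUnitalNonAssocSemiring K] {σ : I → S}
    {e : I → K} (he : ∀ s, ∑ i with σ i = s, e i = 0) (g : S → K) :
    ∑ i, e i * g (σ i) = 0 := by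
  rw [← Finset.sum_fiberwise_of_maps_to fun i hi => Finset.mem_image_of_mem σ hi]
  refine Finset.sum_eq_zero fun s _ => ?_
  calc
    ∑ i with σ i = s, e i * g (σ i) = ∑ i with σ i = s, e i * g s :=
      Finset.sum_congr rfl fun i hi => by rw [(Finset.mem_filter.mp hi).2]
    _ = 0 := by rw [← Finset.sum_mul, he, zero_mul]

open Classical in
theorem sum_sq_sub_comp_eq_add_of_sum_fiber_eq_zero [CommRing K] {σ : I → S} {h : I → K}
    {m : S → K} (hm : ∀ s, ∑ i with σ i = s, (h i - m (σ i)) = 0) (f : S → K) :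
    ∑ i, (h i - f (σ i)) ^ 2 = ∑ i, (h i - m (σ i)) ^ 2 + ∑ i, (m (σ i) - f (σ i)) ^ 2 := by
  have horth : ∑ i, (h i - m (σ i)) * (m (σ i) - f (σ i)) = 0 :=
    sum_mul_comp_eq_zero_of_sum_fiber_eq_zero hm fun s => m s - f s
  calc
    ∑ i, (h i - f (σ i)) ^ 2 = ∑ i, ((h i - m (σ i)) ^ 2 + (m (σ i) - f (σ i)) ^ 2 +
        2 * ((h i - m (σ i)) * (m (σ i) - f (σ i)))) :=
      Finset.sum_congr rfl fun i _ => by ring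
    _ = ∑ i, (h i - m (σ i)) ^ 2 + ∑ i, (m (σ i) - f (σ i)) ^ 2 := by
      rw [Finset.sum_add_distrib, Finset.sum_add_distrib, ← Finset.mul_sum, horth, mul_zero,
        add_zero]

/-- The loss `L̃` of a reward `r`, for visits indexed by `i : I`: visit `i` is to the state `σ i`
and carries the entropy `h i`. For episodes, `I` is the type of pairs `(j, t)` and `c` is their
common length. -/
def visitLoss [Ring K] (σ : I → S) (h : I → K) (c : K) (r : S → K) : K :=
  ∑ i, (h i - c * r (σ i)) ^ 2

open Classical in
/-- The average reward `r*`: the mean entropy of the visits to a state, divided by `c`. It is `0` at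
a state without visits, where it reads `0 / 0`. -/
noncomputable def averageReward [Field K] (σ : I → S) (h : I → K) (c : K) (s : S) : K :=
  (∑ i with σ i = s, h i) / (c * Finset.card {i | σ i = s})

open Classical in
theorem sum_fiber_sub_mul_averageReward_eq_zero [Field K] [CharZero K] (σ : I → S) (h : I → K)
    {c : K} (hc : c ≠ 0) (s : S) :
    ∑ i with σ i = s, (h i - c * averageReward σ h c (σ i)) = 0 := by
  have hconst : ∑ i with σ i = s, (h i - c * averageReward σ h c (σ i)) =
      ∑ i with σ i = s, (h i - c * averageReward σ h c s) :=
    Finset.sum_congr rfl fun i hi => by rw [(Finset.mem_filter.mp hi).2]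
  rw [hconst]
  obtain hs | hs := ({i | σ i = s} : Finset I).eq_empty_or_nonempty
  · rw [hs, Finset.sum_empty]
  · have hcard : (Finset.card {i | σ i = s} : K) ≠ 0 := Nat.cast_ne_zero.mpr hs.card_ne_zero
    rw [Finset.sum_sub_distrib, Finset.sum_const, nsmul_eq_mul, averageReward]
    field_simp
    ring

theorem visitLoss_eq_visitLoss_averageReward_add [Field K] [CharZero K] (σ : I → S) (h : I → K)
    {c : K} (hc : c ≠ 0) (r : S → K) :
    visitLoss σ h c r = visitLoss σ h c (averageReward σ h c) +
      ∑ i, (c * averageReward σ h c (σ i) - c * r (σ i)) ^ 2 :=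
  sum_sq_sub_comp_eq_add_of_sum_fiber_eq_zero (m := fun s => c * averageReward σ h c s)
    (sum_fiber_sub_mul_averageReward_eq_zero σ h hc) fun s => c * r s

theorem optimal_episodic_reward_general [Field K] [LinearOrder K] [IsStrictOrderedRing K]
    (σ : I → S) (h : I → K) {c : K} (hc : c ≠ 0) :
    (∀ r, visitLoss σ h c (averageReward σ h c) ≤ visitLoss σ h c r) ∧
    ∀ r, visitLoss σ h c r = visitLoss σ h c (averageReward σ h c) →
      Set.EqOn r (averageReward σ h c) (Set.range σ) := by
  have hsplit := visitLoss_eq_visitLoss_averageReward_add σ h hc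
  refine ⟨fun r => ?_, ?_⟩
  · rw [hsplit r]
    exact le_add_of_nonneg_right (Finset.sum_nonneg fun i _ => sq_nonneg _)
  · rintro r hr _ ⟨i, rfl⟩
    have hexcess : ∑ i, (c * averageReward σ h c (σ i) - c * r (σ i)) ^ 2 = 0 :=
      left_eq_add.mp (hr.symm.trans (hsplit r))
    have hi := (Finset.sum_eq_zero_iff_of_nonneg fun i _ => sq_nonneg _).mp hexcess i
      (Finset.mem_univ i)
    exact (mul_left_cancel₀ hc (sub_eq_zero.mp (sq_eq_zero_iff.mp hi))).symm

end VisitLoss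

section Episodes

variable {J ι S : Type*} [Fintype J] [Fintype ι]

theorem visitLoss_uncurry {K : Type*} [Ring K] (τ : J → ι → S) (H : J → K) (c : K) (r : S → K) :
    visitLoss τ.uncurry (H ∘ Prod.fst) c r = ∑ j, ∑ t, (H j - c * r (τ j t)) ^ 2 :=
  Fintype.sum_prod_type _

open Classical in
theorem averageReward_uncurry {K : Type*} [Field K] {τ : J → ι → S}
    (hτ : ∀ j, Function.Injective (τ j)) (H : J → K) (c : K) (s : S) :
    averageReward τ.uncurry (H ∘ Prod.fst) c s =
      (∑ j with s ∈ Set.range (τ j), H j) / (c * Finset.card {j | s ∈ Set.range (τ j)}) := by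
  have himage : ({p | τ.uncurry p = s} : Finset (J × ι)).image Prod.fst =
      ({j | s ∈ Set.range (τ j)} : Finset J) := by
    ext j
    simp only [Finset.mem_image, Finset.mem_filter_univ, Prod.exists, Function.uncurry_apply_pair,
      exists_and_right, exists_eq_right, Set.mem_range]
  have hinj : Set.InjOn Prod.fst (({p | τ.uncurry p = s} : Finset (J × ι)) : Set (J × ι)) := by
    rintro ⟨j, t⟩ ht ⟨_, t'⟩ ht' rfl
    simp only [Finset.mem_coe, Finset.mem_filter_univ, Function.uncurry_apply_pair] at ht ht'
    rw [hτ j (ht.trans ht'.symm)]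
  rw [← himage, Finset.sum_image hinj, Finset.card_image_of_injOn hinj]
  rfl

end Episodes

open Classical in
/-- Proposition 1 (optimal episodic intrinsic reward). For episodes `τ_j : Fin T → S`
(each injective, i.e. with pairwise distinct states) with entropy values `H_j`, the loss
`L̃(r) = Σ_j Σ_{t<T} (H_j − T·r(τ_j(t)))²` is minimized by the average episodic state
entropy `r*(s) = (Σ_{j : s ∈ range τ_j} H_j)/(T·|{j : s ∈ range τ_j}|)` (and `r*(s) = 0`
for states in no episode); moreover any minimizer agrees with `r*` on every state that
lies in the range of some episode. -/
theorem optimal_episodic_reward {S : Type*} {J : Type*} [Fintype J] [Nonempty J]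
    (T : ℕ) (hT : 1 ≤ T)
    (τ : J → Fin T → S) (hτ : ∀ j, Function.Injective (τ j))
    (H : J → ℝ)
    (L : (S → ℝ) → ℝ)
    (hL : ∀ r : S → ℝ, L r = ∑ j : J, ∑ t : Fin T, (H j - (T : ℝ) * r (τ j t)) ^ 2)
    (rStar : S → ℝ)
    (hrStar : ∀ s : S,
      rStar s =
        if (Finset.univ.filter (fun j : J => s ∈ Set.range (τ j))).Nonempty then
          (∑ j ∈ Finset.univ.filter (fun j : J => s ∈ Set.range (τ j)), H j) /
            ((T : ℝ) * (Finset.univ.filter (fun j : J => s ∈ Set.range (τ j))).card)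
        else 0) :
    (∀ r : S → ℝ, L rStar ≤ L r) ∧
    (∀ r : S → ℝ, L r = L rStar →
      ∀ s : S, (∃ j : J, s ∈ Set.range (τ j)) → r s = rStar s) := by
  have hT₀ : (T : ℝ) ≠ 0 := Nat.cast_ne_zero.mpr (Nat.one_le_iff_ne_zero.mp hT)
  obtain rfl : L = visitLoss τ.uncurry (H ∘ Prod.fst) T :=
    funext fun r => (hL r).trans (visitLoss_uncurry τ H T r).symm
  obtain rfl : rStar = averageReward τ.uncurry (H ∘ Prod.fst) T := funext fun s => by
    rw [hrStar, averageReward_uncurry hτ, ite_eq_left_iff]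
    intro hs
    rw [Finset.not_nonempty_iff_eq_empty.mp hs, Finset.sum_empty, zero_div]
  obtain ⟨hmin, hunique⟩ := optimal_episodic_reward_general τ.uncurry (H ∘ Prod.fst) hT₀
  exact ⟨hmin, fun r hr s ⟨j, t, hs⟩ => hunique r hr ⟨(j, t), hs⟩⟩
end

section
/- Let σ > 0, ε > 0, and s_1, …, s_N ∈ ℝ^d with N ≥ 1. For each i ∈ {1,…,N} let A_i ⊆ {1,…,N} be a nonempty set of indices (the k nearest neighbors of s_i, together with i itself), and suppose that for every j ∉ A_i one has ‖s_i − s_j‖ ≥ √(2σ·log(|A_iᶜ|/ε)). Then, with κ_σ(x, y) = exp(−‖x − y‖²/(2σ)) and H_KDE := log N − (1/N)·Σ_{i=1}^N log(Σ_{j=1}^N κ_σ(s_i, s_j)), one has log N − (1/N)·Σ_{i=1}^N log( ε + Σ_{j∈A_i} κ_σ(s_i, s_j) ) ≤ H_KDE ≤ log N − (1/N)·Σ_{i=1}^N log( Σ_{j∈A_i} κ_σ(s_i, s_j) ). -/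
section

open Finset Real

lemma exp_neg_sq_div_le_inv_of_sqrt_mul_log_le {c t r : ℝ} (hc : 0 < c) (ht : 0 < t)
    (h : √(c * log t) ≤ r) : exp (-r ^ 2 / c) ≤ t⁻¹ := by
  have hlog : log t ≤ r ^ 2 / c := (le_div_iff₀' hc).mpr (sqrt_le_iff.mp h).2
  rw [← le_log_iff_exp_le (inv_pos.mpr ht), log_inv, neg_div]
  exact neg_le_neg hlog

lemma sum_le_of_forall_le_div_card {ι 𝕜 : Type*} [Field 𝕜] [LinearOrder 𝕜] [IsStrictOrderedRing 𝕜]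
    {B : Finset ι} {f : ι → 𝕜} {a : 𝕜} (ha : 0 ≤ a) (hf : ∀ j ∈ B, f j ≤ a / #B) :
    ∑ j ∈ B, f j ≤ a :=
  calc
    ∑ j ∈ B, f j ≤ #B • (a / #B) := sum_le_card_nsmul B f _ hf
    _ = a * (#B / #B) := by rw [nsmul_eq_mul, mul_div_left_comm]
    _ ≤ a := mul_le_of_le_one_right ha (div_self_le_one _)

/-- The Gaussian kernel of width `σ` on a metric space, used as the kernel of a density estimator.
The width enters as a variance, and the kernel is not normalized: it equals `1` on the diagonal. -/
noncomputable def gaussianKernel {X : Type*} [PseudoMetricSpace X] (σ : ℝ) (x y : X) : ℝ :=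
  exp (-dist x y ^ 2 / (2 * σ))

/-- The entropy estimate `H_KDE` of the sample `s`: minus the sample mean of the logarithm of its
kernel density estimate. The kernel is unnormalized, so this omits the additive constant that a
normalized density would contribute. -/
noncomputable def kdeEntropy {ι X : Type*} [Fintype ι] [PseudoMetricSpace X] (σ : ℝ) (s : ι → X) :
    ℝ :=
  -(1 / (Fintype.card ι : ℝ)) *
    ∑ i, log (1 / (Fintype.card ι : ℝ) * ∑ j, gaussianKernel σ (s i) (s j))

variable {ι X : Type*} [PseudoMetricSpace X]

lemma sum_gaussianKernel_pos (σ : ℝ) (x : X) (s : ι → X) {B : Finset ι} (hB : B.Nonempty) :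
    0 < ∑ j ∈ B, gaussianKernel σ x (s j) :=
  sum_pos (fun _ _ ↦ exp_pos _) hB

variable [Fintype ι]

lemma sum_gaussianKernel_le_add_sum [DecidableEq ι] {σ ε : ℝ} (hσ : 0 < σ) (hε : 0 < ε)
    {x : X} {s : ι → X} {A : Finset ι}
    (hdist : ∀ j ∉ A, √(2 * σ * log (#Aᶜ / ε)) ≤ dist x (s j)) :
    ∑ j, gaussianKernel σ x (s j) ≤ ε + ∑ j ∈ A, gaussianKernel σ x (s j) := by
  have hterm : ∀ j ∈ Aᶜ, gaussianKernel σ x (s j) ≤ ε / #Aᶜ := fun j hj ↦ by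
    have hcard : (0 : ℝ) < #Aᶜ := Nat.cast_pos.mpr (card_pos.mpr ⟨j, hj⟩)
    rw [← inv_div]
    exact exp_neg_sq_div_le_inv_of_sqrt_mul_log_le (mul_pos two_pos hσ) (div_pos hcard hε)
      (hdist j (mem_compl.mp hj))
  rw [← sum_compl_add_sum A]
  gcongr
  exact sum_le_of_forall_le_div_card hε.le hterm

variable [Nonempty ι]

lemma kdeEntropy_eq_log_card_sub (σ : ℝ) (s : ι → X) :
    kdeEntropy σ s = log (Fintype.card ι) -
      1 / (Fintype.card ι : ℝ) * ∑ i, log (∑ j, gaussianKernel σ (s i) (s j)) := by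
  have hcard : (Fintype.card ι : ℝ) ≠ 0 := Nat.cast_ne_zero.mpr Fintype.card_ne_zero
  have hlog (i : ι) : log (1 / (Fintype.card ι : ℝ) * ∑ j, gaussianKernel σ (s i) (s j)) =
      log (∑ j, gaussianKernel σ (s i) (s j)) - log (Fintype.card ι) := by
    rw [one_div_mul_eq_div, log_div (sum_gaussianKernel_pos σ (s i) s univ_nonempty).ne' hcard]
  simp only [kdeEntropy, hlog, sum_sub_distrib, sum_const, card_univ, nsmul_eq_mul]
  field_simp
  ring

theorem kde_entropy_knn_sandwich_general [DecidableEq ι] {σ ε : ℝ} (hσ : 0 < σ) (hε : 0 < ε)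
    (s : ι → X) (A : ι → Finset ι) (hA : ∀ i, (A i).Nonempty)
    (hdist : ∀ i, ∀ j ∉ A i, √(2 * σ * log (#(A i)ᶜ / ε)) ≤ dist (s i) (s j)) :
    log (Fintype.card ι) - 1 / (Fintype.card ι : ℝ) *
        ∑ i, log (ε + ∑ j ∈ A i, gaussianKernel σ (s i) (s j)) ≤ kdeEntropy σ s ∧
    kdeEntropy σ s ≤ log (Fintype.card ι) - 1 / (Fintype.card ι : ℝ) *
        ∑ i, log (∑ j ∈ A i, gaussianKernel σ (s i) (s j)) := by
  rw [kdeEntropy_eq_log_card_sub]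
  constructor
  · gcongr with i
    · exact sum_gaussianKernel_pos σ (s i) s univ_nonempty
    · exact sum_gaussianKernel_le_add_sum hσ hε (hdist i)
  · gcongr with i
    · exact sum_gaussianKernel_pos σ (s i) s (hA i)
    · exact fun _ _ _ ↦ (exp_pos _).le
    · exact subset_univ _

end

/-- Sandwich bound for the Gaussian KDE entropy estimator: if for each `i` every
non-neighbor `j ∉ A i` satisfies `‖s_i − s_j‖ ≥ √(2σ·log(|A_iᶜ|/ε))`, then
`H_KDE = log N − (1/N)·Σ_i log(Σ_j κ_σ(s_i, s_j))` is sandwiched between the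
`k`-nearest-neighbor truncations of the kernel sums, up to tolerance `ε`. -/
theorem kde_entropy_knn_sandwich {d : ℕ} (σ ε : ℝ) (hσ : 0 < σ) (hε : 0 < ε)
    (N : ℕ) (hN : 1 ≤ N) (s : Fin N → EuclideanSpace ℝ (Fin d))
    (A : Fin N → Finset (Fin N)) (hA : ∀ i, (A i).Nonempty)
    (hdist : ∀ i, ∀ j ∉ A i,
      Real.sqrt (2 * σ * Real.log (((A i)ᶜ.card : ℝ) / ε)) ≤ ‖s i - s j‖) :
    Real.log N -
        (1 / (N : ℝ)) *
          ∑ i, Real.log (ε + ∑ j ∈ A i, Real.exp (-‖s i - s j‖ ^ 2 / (2 * σ))) ≤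
      Real.log N -
        (1 / (N : ℝ)) * ∑ i, Real.log (∑ j, Real.exp (-‖s i - s j‖ ^ 2 / (2 * σ))) ∧
    Real.log N -
        (1 / (N : ℝ)) * ∑ i, Real.log (∑ j, Real.exp (-‖s i - s j‖ ^ 2 / (2 * σ))) ≤
      Real.log N -
        (1 / (N : ℝ)) *
          ∑ i, Real.log (∑ j ∈ A i, Real.exp (-‖s i - s j‖ ^ 2 / (2 * σ))) := by
  have : Nonempty (Fin N) := ⟨⟨0, hN⟩⟩
  simp only [← dist_eq_norm] at hdist ⊢
  simpa only [kdeEntropy_eq_log_card_sub, gaussianKernel, Fintype.card_fin] using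
    kde_entropy_knn_sandwich_general hσ hε s A hA hdist
end
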